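/- Fix m ≥ 1 and λ_1 ≥ ⋯ ≥ λ_{m+1} in Γ. Suppose that for each 0 ≤ k ≤ m we have a partial flag V_{k,m} ⊆ V_{k,m−1} ⊆ ⋯ ⊆ V_{k,k+1} ⊆ V_{k,k} ⊆ R^n of vector subspaces satisfying Δ(V_{k,ℓ}, V_{k+1,ℓ}) ≥ λ_{k+1} − λ_{ℓ+1} for 0 ≤ k < ℓ ≤ m (in particular dim V_{k,ℓ} = dim V_{k+1,ℓ}). Let P_{k,ℓ} denote the orthogonal projection of R^n onto V_{k,ℓ}. Then v((1 − P_{0,0})P_{1,1}P_{2,2}⋯P_{m,m}) ≥ λ_1 − λ_{m+1}; and if moreover dim V_{1,1} = dim V_{0,0} (which implies V_{0,1} = V_{0,0}), then also v((P_{0,0} − P_{1,1})P_{2,2}P_{3,3}⋯P_{m,m}) ≥ λ_1 − λ_{m+1}. -/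

import Mathlib

open FirstOrder Matrix Topology Set
open scoped Classical

noncomputable section

namespace LipStrat

/-- A real closed field: an ordered field in which every nonnegative element is a square and
every polynomial of odd degree has a root. -/
class IsRealClosed (R : Type*) [Field R] [LinearOrder R] [IsStrictOrderedRing R] : Prop where
  exists_sq : ∀ x : R, 0 ≤ x → ∃ y : R, y ^ 2 = x
  exists_root : ∀ p : Polynomial R, Odd p.natDegree → ∃ x : R, p.eval x = 0

variable {R : Type*} [Field R] [LinearOrder R] [IsStrictOrderedRing R] [IsRealClosed R]

theorem exists_enorm {ι : Type*} [Fintype ι] (x : ι → R) :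
    ∃ y : R, 0 ≤ y ∧ y ^ 2 = ∑ i, x i ^ 2 := by
  obtain ⟨y, hy⟩ := IsRealClosed.exists_sq (∑ i, x i ^ 2)
    (Finset.sum_nonneg fun i _ => sq_nonneg _)
  exact ⟨|y|, abs_nonneg y, by rwa [sq_abs]⟩

/-- The euclidean norm of a vector over a real closed field. -/
def enorm {ι : Type*} [Fintype ι] (x : ι → R) : R := (exists_enorm x).choose

/-- The distance from a point to a set: the infimum (if it exists) of euclidean distances. -/
def infDist {ι : Type*} [Fintype ι] (a : ι → R) (X : Set (ι → R)) : R :=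
  if h : ∃ r : R, IsGLB ((fun x => enorm (a - x)) '' X) r then h.choose else 0

/-- The operator norm of a matrix: the supremum (if it exists) of `‖M x‖` over `‖x‖ = 1`. -/
def opNorm {k l : ℕ} (M : Matrix (Fin k) (Fin l) R) : R :=
  if h : ∃ r : R, IsLUB ((fun x => enorm (M.mulVec x)) '' {x | enorm x = 1}) r then h.choose
  else 0

end LipStrat
section MT

open FirstOrder

namespace LipStrat

variable {R : Type*} [Field R] [LinearOrder R] [IsStrictOrderedRing R] [IsRealClosed R]
variable (L : FirstOrder.Language) [L.Structure R]

/-- The graph of a function `R^k → R^l`, as a subset of a finite cartesian power of `R`. -/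
def graphSet {k l : ℕ} (f : (Fin k → R) → Fin l → R) : Set ((Fin k ⊕ Fin l) → R) :=
  {v | f (v ∘ Sum.inl) = v ∘ Sum.inr}

/-- A function `R^k → R^l` is definable with parameters in `A` if its graph is. -/
def DefFun (A : Set R) {k l : ℕ} (f : (Fin k → R) → Fin l → R) : Prop :=
  Set.Definable A L (graphSet f)

/-- A scalar-valued function `R^k → R` is definable with parameters in `A` if its graph is. -/
def DefFun₁ (A : Set R) {k : ℕ} (f : (Fin k → R) → R) : Prop :=
  DefFun L A (fun x => fun _ : Fin 1 => f x)

variable [TopologicalSpace R] [OrderTopology R]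

/-- `R` (with the order topology) is o-minimal as an `L`-structure: every subset of `R`
definable with arbitrary parameters is a finite union of points and open intervals;
equivalently (in a dense linear order), its topological frontier is finite. -/
def IsOMinimal : Prop :=
  ∀ s : Set R, Set.Definable (Set.univ : Set R) L {v : Fin 1 → R | v 0 ∈ s} →
    (frontier s).Finite

/-- The language `L` expands the (ordered) ring language: the graphs of addition and
multiplication and the order relation are `∅`-definable. -/
structure ExpandsOrderedRing : Prop where
  add_def : Set.Definable (∅ : Set R) L {v : Fin 3 → R | v 0 + v 1 = v 2}
  mul_def : Set.Definable (∅ : Set R) L {v : Fin 3 → R | v 0 * v 1 = v 2}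
  lt_def : Set.Definable (∅ : Set R) L {v : Fin 2 → R | v 0 < v 1}

/-- `R` is power-bounded: every definable function `R → R` is eventually bounded in absolute
value by a definable endomorphism of the multiplicative group `R^×` (a "power function"). -/
def IsPowerBounded : Prop :=
  ∀ f : R → R, DefFun₁ L (Set.univ : Set R) (fun v : Fin 1 → R => f (v 0)) →
    ∃ g : R → R, DefFun₁ L (Set.univ : Set R) (fun v : Fin 1 → R => g (v 0)) ∧
      (∀ x y : R, x ≠ 0 → y ≠ 0 → g (x * y) = g x * g y) ∧
      (∀ x : R, x ≠ 0 → g x ≠ 0) ∧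
      ∃ x₀ : R, ∀ x : R, x₀ ≤ x → |f x| ≤ g x

/-- The o-minimal dimension of a subset of `R^n`: the largest `d` such that some projection
to `d` coordinates has nonempty interior. -/
def odim {n : ℕ} (s : Set (Fin n → R)) : ℕ :=
  sSup {d | ∃ f : Fin d → Fin n, Function.Injective f ∧
    (interior ((fun x : Fin n → R => x ∘ f) '' s)).Nonempty}

end LipStrat

end MT
section Calc

namespace LipStrat

open Matrix

variable {R : Type*} [Field R] [LinearOrder R] [IsStrictOrderedRing R] [IsRealClosed R]

/-- `f` has (total) derivative given by the matrix `J` at the point `a`. -/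
def HasDerivAtPt {k l : ℕ} (f : (Fin k → R) → Fin l → R) (J : Fin l → Fin k → R)
    (a : Fin k → R) : Prop :=
  ∀ ε : R, 0 < ε → ∃ δ : R, 0 < δ ∧ ∀ x : Fin k → R, enorm (x - a) < δ →
    enorm (fun i => f x i - f a i - ∑ j, J i j * (x j - a j)) ≤ ε * enorm (x - a)

/-- `f` has gradient `g` at `a` (scalar-valued version). -/
def HasGradAtPt {k : ℕ} (f : (Fin k → R) → R) (g : Fin k → R) (a : Fin k → R) : Prop :=
  ∀ ε : R, 0 < ε → ∃ δ : R, 0 < δ ∧ ∀ x : Fin k → R, enorm (x - a) < δ →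
    |f x - f a - ∑ j, g j * (x j - a j)| ≤ ε * enorm (x - a)

variable [TopologicalSpace R] [OrderTopology R]

/-- `f` is C¹ on `U`, with Jacobian matrix function `J` (continuous on `U`). -/
def IsC1On {k l : ℕ} (f : (Fin k → R) → Fin l → R) (U : Set (Fin k → R))
    (J : (Fin k → R) → Fin l → Fin k → R) : Prop :=
  (∀ a ∈ U, HasDerivAtPt f (J a) a) ∧ ContinuousOn J U

/-- `f` is C¹ on `U` (scalar version), with gradient function `g` (continuous on `U`). -/
def IsC1ScalarOn {k : ℕ} (f : (Fin k → R) → R) (U : Set (Fin k → R))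
    (g : (Fin k → R) → Fin k → R) : Prop :=
  (∀ a ∈ U, HasGradAtPt f (g a) a) ∧ ContinuousOn g U

variable (L : FirstOrder.Language) [L.Structure R]

/-- `(U, V, ψ, J)` is a definable C¹ parametrization (chart) of a relatively open piece `U` of
`S ⊆ R^n` by an open set `V ⊆ R^d`: `ψ` is a definable C¹ immersion mapping `V` bijectively
and bi-continuously onto `U`. -/
def IsC1Param (A : Set R) {n d : ℕ} (S : Set (Fin n → R)) (U : Set (Fin n → R))
    (V : Set (Fin d → R)) (ψ : (Fin d → R) → Fin n → R)
    (J : (Fin d → R) → Fin n → Fin d → R) : Prop :=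
  IsOpen V ∧ (∃ W : Set (Fin n → R), IsOpen W ∧ U = S ∩ W) ∧
  Set.Definable A L V ∧ Set.Definable A L U ∧ DefFun L A ψ ∧
  IsC1On ψ V J ∧ Set.InjOn ψ V ∧ ψ '' V = U ∧
  (∀ x ∈ V, LinearIndependent R (fun j : Fin d => fun i : Fin n => J x i j)) ∧
  (∀ V' ⊆ V, IsOpen V' → ∃ W : Set (Fin n → R), IsOpen W ∧ ψ '' V' = U ∩ W)

/-- `S ⊆ R^n` is a definable C¹ submanifold of dimension `d`: it admits a finite cover by
definable C¹ charts. -/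
def IsDefC1Manifold (A : Set R) {n : ℕ} (S : Set (Fin n → R)) (d : ℕ) : Prop :=
  ∃ (N : ℕ) (U : Fin N → Set (Fin n → R)) (V : Fin N → Set (Fin d → R))
    (ψ : Fin N → (Fin d → R) → Fin n → R) (J : Fin N → (Fin d → R) → Fin n → Fin d → R),
    S ⊆ (⋃ i, U i) ∧ ∀ i, IsC1Param L A S (U i) (V i) (ψ i) (J i)

/-- `T` is the tangent space of the `d`-dimensional definable C¹ submanifold `S` at `a ∈ S`:
the span of the columns of the Jacobian of some definable chart at `a`. -/
def IsTangentAt (A : Set R) {n : ℕ} (S : Set (Fin n → R)) (d : ℕ) (a : Fin n → R)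
    (T : Submodule R (Fin n → R)) : Prop :=
  ∃ (U : Set (Fin n → R)) (V : Set (Fin d → R)) (ψ : (Fin d → R) → Fin n → R)
    (J : (Fin d → R) → Fin n → Fin d → R) (x : Fin d → R),
    IsC1Param L A S U V ψ J ∧ x ∈ V ∧ ψ x = a ∧
    T = Submodule.span R (Set.range fun j : Fin d => fun i : Fin n => J x i j)

/-- `P` is the matrix of the orthogonal projection of `R^n` onto the subspace `W`
(with respect to the standard inner product). -/
def IsOrthProjOnto {n : ℕ} (W : Submodule R (Fin n → R)) (P : Matrix (Fin n) (Fin n) R) :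
    Prop :=
  (∀ x : Fin n → R, P.mulVec x ∈ W) ∧ (∀ w ∈ W, P.mulVec w = w) ∧
  (∀ x : Fin n → R, ∀ w ∈ W, (x - P.mulVec x) ⬝ᵥ w = 0)

end LipStrat

end Calc
section Strat

namespace LipStrat

open Matrix

variable {R : Type*} [Field R] [LinearOrder R] [IsStrictOrderedRing R] [IsRealClosed R]
variable [TopologicalSpace R] [OrderTopology R]
variable (L : FirstOrder.Language) [L.Structure R]

/-- `X^{i-1}`, with the convention `X^{-1} = ∅`. -/
def Xlow {n : ℕ} (X' : ℕ → Set (Fin n → R)) (i : ℕ) : Set (Fin n → R) :=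
  if i = 0 then ∅ else X' (i - 1)

/-- The `i`-th skeleton `X̊^i = X^i ∖ X^{i-1}` of a stratification. -/
def skel {n : ℕ} (X' : ℕ → Set (Fin n → R)) (i : ℕ) : Set (Fin n → R) :=
  X' i \ Xlow X' i

/-- `u` is relatively closed in `s`. -/
def RelClosedIn {n : ℕ} (u s : Set (Fin n → R)) : Prop :=
  u ⊆ s ∧ closure u ∩ s ⊆ u

/-- `s` is definably connected: it is not the disjoint union of two nonempty relatively
closed definable subsets. -/
def DefConnected (A : Set R) {n : ℕ} (s : Set (Fin n → R)) : Prop :=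
  ∀ u v : Set (Fin n → R), Set.Definable A L u → Set.Definable A L v →
    RelClosedIn u s → RelClosedIn v s → u ∪ v = s → u ∩ v = ∅ → u = ∅ ∨ v = ∅

/-- `c` is a stratum of the stratification `X'`: a definably connected component of one of
the skeletons. -/
def IsStratum (A : Set R) {n : ℕ} (X' : ℕ → Set (Fin n → R)) (c : Set (Fin n → R)) : Prop :=
  ∃ i : ℕ, c.Nonempty ∧ c ⊆ skel X' i ∧ Set.Definable A L c ∧ DefConnected L A c ∧
    ∀ c' : Set (Fin n → R), c ⊆ c' → c' ⊆ skel X' i → Set.Definable A L c' →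
      DefConnected L A c' → c' = c

/-- `X' = (X^0 ⊆ X^1 ⊆ ⋯ ⊆ X^d = X)` is a definable stratification of the `d`-dimensional
definable set `X ⊆ R^n` (with parameters in `A`). -/
def IsDefStratification (A : Set R) {n : ℕ} (d : ℕ) (X' : ℕ → Set (Fin n → R))
    (X : Set (Fin n → R)) : Prop :=
  (∀ i j : ℕ, i ≤ j → X' i ⊆ X' j) ∧
  (∀ i : ℕ, d ≤ i → X' i = X) ∧
  (∀ i : ℕ, Set.Definable A L (X' i)) ∧
  (∀ i : ℕ, closure (X' i) ∩ X ⊆ X' i) ∧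
  (∀ i : ℕ, odim (X' i) ≤ i) ∧
  (∀ i : ℕ, i ≤ d → skel X' i = ∅ ∨ IsDefC1Manifold L A (skel X' i) i) ∧
  (∀ c c' : Set (Fin n → R), IsStratum L A X' c → IsStratum L A X' c' →
    (c' ∩ closure c).Nonempty → c' ⊆ closure c)

variable {n : ℕ}

/-- Condition (1) on chains: `‖a⁰ - aˡ‖ < c · dist(a⁰, X^{eₗ})`. -/
def chainIneq1 (c : R) (X' : ℕ → Set (Fin n → R)) (a0 al : Fin n → R) (el : ℕ) : Prop :=
  enorm (a0 - al) < c * infDist a0 (X' el)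

/-- `dist(a⁰, X^{i-1}) ≥ C' · dist(a⁰, X^i)` (trivially true if `X^{i-1} = ∅`). -/
def distGeCond (C' : R) (X' : ℕ → Set (Fin n → R)) (a0 : Fin n → R) (i : ℕ) : Prop :=
  Xlow X' i = ∅ ∨ C' * infDist a0 (X' i) ≤ infDist a0 (Xlow X' i)

/-- `dist(a⁰, X^{i-1}) < c' · dist(a⁰, X^i)` (false if `X^{i-1} = ∅`). -/
def distLtCond (c' : R) (X' : ℕ → Set (Fin n → R)) (a0 : Fin n → R) (i : ℕ) : Prop :=
  Xlow X' i ≠ ∅ ∧ infDist a0 (Xlow X' i) < c' * infDist a0 (X' i)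

/-- `a⁰, …, aᵐ` is a plain chain for the constants `(c, c', C')`. -/
def IsPlainChain (c c' C' : R) (X' : ℕ → Set (Fin n → R)) (m : ℕ) (e : ℕ → ℕ)
    (a : ℕ → Fin n → R) : Prop :=
  (∀ l : ℕ, l ≤ m → a l ∈ skel X' (e l)) ∧
  (∀ k l : ℕ, k < l → l ≤ m → e l < e k) ∧
  (∀ l : ℕ, 1 ≤ l → l ≤ m → chainIneq1 c X' (a 0) (a l) (e l)) ∧
  (∀ i : ℕ, e m ≤ i → i < e 0 →
    ((∃ l : ℕ, 1 ≤ l ∧ l ≤ m ∧ e l = i) → distGeCond C' X' (a 0) i) ∧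
    ((¬ ∃ l : ℕ, 1 ≤ l ∧ l ≤ m ∧ e l = i) → distLtCond c' X' (a 0) i))

/-- `a⁰, a¹, …, aᵐ` is an augmented chain for the constants `(c, c', C', C'')`:
`a⁰, a², …, aᵐ` is a plain chain and `a¹` is an extra point in the same skeleton as `a⁰`
with `‖a⁰ - a¹‖ ≤ dist(a⁰, X^{e₁-1})/C''`. -/
def IsAugChain (c c' C' C'' : R) (X' : ℕ → Set (Fin n → R)) (m : ℕ) (e : ℕ → ℕ)
    (a : ℕ → Fin n → R) : Prop :=
  1 ≤ m ∧ e 1 = e 0 ∧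
  (∀ l : ℕ, l ≤ m → a l ∈ skel X' (e l)) ∧
  (∀ k l : ℕ, 1 ≤ k → k < l → l ≤ m → e l < e k) ∧
  (∀ l : ℕ, 2 ≤ l → l ≤ m → chainIneq1 c X' (a 0) (a l) (e l)) ∧
  (∀ i : ℕ, e m ≤ i → i < e 0 →
    ((∃ l : ℕ, 2 ≤ l ∧ l ≤ m ∧ e l = i) → distGeCond C' X' (a 0) i) ∧
    ((¬ ∃ l : ℕ, 2 ≤ l ∧ l ≤ m ∧ e l = i) → distLtCond c' X' (a 0) i)) ∧
  (Xlow X' (e 1) = ∅ ∨ C'' * enorm (a 0 - a 1) ≤ infDist (a 0) (Xlow X' (e 1)))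

/-- `P l` is the orthogonal projection onto the tangent space of the skeleton `X̊^{eₗ}`
at `aˡ`, for `l ≤ m`. -/
def ChainProjs (A : Set R) (X' : ℕ → Set (Fin n → R)) (e : ℕ → ℕ) (a : ℕ → Fin n → R)
    (P : ℕ → Matrix (Fin n) (Fin n) R) (m : ℕ) : Prop :=
  ∀ l : ℕ, l ≤ m → ∃ T : Submodule R (Fin n → R),
    IsTangentAt L A (skel X' (e l)) (e l) (a l) T ∧ IsOrthProjOnto T (P l)

/-- The ordered product `P lo * P (lo+1) * ⋯ * P (lo+len-1)`. -/
def prodP (P : ℕ → Matrix (Fin n) (Fin n) R) (lo len : ℕ) : Matrix (Fin n) (Fin n) R :=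
  ((List.range len).map (fun l => P (lo + l))).prod

/-- The Mostowski inequality `‖Q‖ < C''' ‖a⁰-a¹‖ / dist(a⁰, X^{e_m - 1})`, where the left hand
side is required to be `0` if `X^{e_m-1} = ∅`. -/
def mostowskiIneq (C''' : R) (X' : ℕ → Set (Fin n → R)) (em : ℕ) (a0 a1 : Fin n → R)
    (Q : Matrix (Fin n) (Fin n) R) : Prop :=
  if Xlow X' em = ∅ then Q = 0
  else opNorm Q * infDist a0 (Xlow X' em) < C''' * enorm (a0 - a1)

/-- The stratification `X'` satisfies the Mostowski Conditions for `(c, c', C', C'', C''')`. -/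
def SatisfiesMostowski (A : Set R) (X' : ℕ → Set (Fin n → R)) (c c' C' C'' C''' : R) : Prop :=
  (∀ (m : ℕ) (e : ℕ → ℕ) (a : ℕ → Fin n → R), 1 ≤ m → IsPlainChain c c' C' X' m e a →
    ∀ P : ℕ → Matrix (Fin n) (Fin n) R, ChainProjs L A X' e a P m →
      mostowskiIneq C''' X' (e m) (a 0) (a 1) ((1 - P 0) * prodP P 1 m)) ∧
  (∀ (m : ℕ) (e : ℕ → ℕ) (a : ℕ → Fin n → R), IsAugChain c c' C' C'' X' m e a →
    ∀ P : ℕ → Matrix (Fin n) (Fin n) R, ChainProjs L A X' e a P m →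
      mostowskiIneq C''' X' (e m) (a 0) (a 1) ((P 0 - P 1) * prodP P 2 (m - 1)))

/-- `X'` is a Lipschitz stratification: for every `c > 1` there is `C` such that the
Mostowski Conditions hold for `(c, 2c², 2c², 2c, C)`. -/
def IsLipschitzStrat (A : Set R) (X' : ℕ → Set (Fin n → R)) : Prop :=
  ∀ c : R, 1 < c → ∃ C : R,
    SatisfiesMostowski L A X' c (2 * c ^ 2) (2 * c ^ 2) (2 * c) C

end LipStrat

end Strat
section Val

namespace LipStrat

open Matrix

variable {R : Type*} [Field R] [LinearOrder R] [IsStrictOrderedRing R] [IsRealClosed R]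

/-- The convex closure of a subset `R₀ ⊆ R`: the elements bounded by an element of `R₀`.
When `R₀` is (the carrier of) an elementary substructure, this is a valuation ring `O` of `R`. -/
def convexClosure (R₀ : Set R) : Set R :=
  {a : R | ∃ b ∈ R₀, -b < a ∧ a < b}

/-- `v(x) ≥ v(y)` for the valuation `v` associated to the valuation ring `O`:
`x` is an `O`-multiple of `y`. -/
def vge (O : Set R) (x y : R) : Prop := ∃ u ∈ O, x = u * y

/-- `v(x) > v(y)`. -/
def vgt (O : Set R) (x y : R) : Prop := vge O x y ∧ ¬ vge O y x

/-- `v(x) = v(y)`. -/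
def veq (O : Set R) (x y : R) : Prop := vge O x y ∧ vge O y x

variable {n : ℕ}

/-- `v(s) > v-dist(a₀, X)`, where `v(s) = min_i v(sᵢ)` and
`v-dist(a₀, X) = sup_{x ∈ X} v(a₀ - x) = v(dist(a₀, X))` (`-∞` for `X = ∅`). -/
def vdistLtVec (O : Set R) (s : Fin n → R) (a0 : Fin n → R) (X : Set (Fin n → R)) : Prop :=
  X = ∅ ∨ ∀ i, vgt O (s i) (infDist a0 X)

/-- `v(s) ≥ v-dist(a₀, X)`. -/
def vdistLeVec (O : Set R) (s : Fin n → R) (a0 : Fin n → R) (X : Set (Fin n → R)) : Prop :=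
  X = ∅ ∨ ∀ i, vge O (s i) (infDist a0 X)

/-- `v(s) = v-dist(a₀, X)` (which in particular forces `X ≠ ∅`). -/
def vdistEqVec (O : Set R) (s : Fin n → R) (a0 : Fin n → R) (X : Set (Fin n → R)) : Prop :=
  X ≠ ∅ ∧ (∀ i, vge O (s i) (infDist a0 X)) ∧ (∃ i, vge O (infDist a0 X) (s i))

/-- `a⁰, …, aᵐ` is a plain val-chain. -/
def IsPlainValChain (O : Set R) (X' : ℕ → Set (Fin n → R)) (m : ℕ) (e : ℕ → ℕ)
    (a : ℕ → Fin n → R) : Prop :=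
  (∀ l : ℕ, l ≤ m → a l ∈ skel X' (e l)) ∧
  (∀ k l : ℕ, k < l → l ≤ m → e l < e k) ∧
  (∀ l : ℕ, 1 ≤ l → l ≤ m → vdistLtVec O (a 0 - a l) (a 0) (Xlow X' (e l))) ∧
  (∀ l : ℕ, 1 ≤ l → l ≤ m → vdistEqVec O (a 0 - a l) (a 0) (Xlow X' (e (l - 1))))

/-- `a⁰, …, aᵐ` is an augmented val-chain. -/
def IsAugValChain (O : Set R) (X' : ℕ → Set (Fin n → R)) (m : ℕ) (e : ℕ → ℕ)
    (a : ℕ → Fin n → R) : Prop :=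
  1 ≤ m ∧ e 1 = e 0 ∧
  (∀ l : ℕ, l ≤ m → a l ∈ skel X' (e l)) ∧
  (∀ k l : ℕ, 1 ≤ k → k < l → l ≤ m → e l < e k) ∧
  (∀ l : ℕ, 1 ≤ l → l ≤ m → vdistLtVec O (a 0 - a l) (a 0) (Xlow X' (e l))) ∧
  (∀ l : ℕ, 2 ≤ l → l ≤ m → vdistEqVec O (a 0 - a l) (a 0) (Xlow X' (e (l - 1))))

/-- `a⁰, …, aᵐ` is a weak plain val-chain (the strict inequality on distances is weakened). -/
def IsWeakPlainValChain (O : Set R) (X' : ℕ → Set (Fin n → R)) (m : ℕ) (e : ℕ → ℕ)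
    (a : ℕ → Fin n → R) : Prop :=
  (∀ l : ℕ, l ≤ m → a l ∈ skel X' (e l)) ∧
  (∀ k l : ℕ, k < l → l ≤ m → e l < e k) ∧
  (∀ l : ℕ, 1 ≤ l → l ≤ m → vdistLeVec O (a 0 - a l) (a 0) (Xlow X' (e l))) ∧
  (∀ l : ℕ, 1 ≤ l → l ≤ m → vdistEqVec O (a 0 - a l) (a 0) (Xlow X' (e (l - 1))))

/-- `a⁰, …, aᵐ` is a weak augmented val-chain. -/
def IsWeakAugValChain (O : Set R) (X' : ℕ → Set (Fin n → R)) (m : ℕ) (e : ℕ → ℕ)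
    (a : ℕ → Fin n → R) : Prop :=
  1 ≤ m ∧ e 1 = e 0 ∧
  (∀ l : ℕ, l ≤ m → a l ∈ skel X' (e l)) ∧
  (∀ k l : ℕ, 1 ≤ k → k < l → l ≤ m → e l < e k) ∧
  (∀ l : ℕ, 1 ≤ l → l ≤ m → vdistLeVec O (a 0 - a l) (a 0) (Xlow X' (e l))) ∧
  (∀ l : ℕ, 2 ≤ l → l ≤ m → vdistEqVec O (a 0 - a l) (a 0) (Xlow X' (e (l - 1))))

/-- The valuative Mostowski inequality `v(Q) ≥ λ₁ - λ_{m+1}`, where `λ₁ = v(a⁰ - a¹)` and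
`λ_{m+1} = v-dist(a⁰, X^{e_m - 1})`. If `λ_{m+1} = -∞` (i.e. `X^{e_m-1} = ∅`), `Q` must be `0`. -/
def valMostIneq (O : Set R) (X' : ℕ → Set (Fin n → R)) (em : ℕ) (a0 a1 : Fin n → R)
    (Q : Matrix (Fin n) (Fin n) R) : Prop :=
  if Xlow X' em = ∅ then Q = 0
  else ∀ i j : Fin n, ∃ k : Fin n, vge O (Q i j * infDist a0 (Xlow X' em)) ((a0 - a1) k)

variable [TopologicalSpace R] [OrderTopology R]
variable (L : FirstOrder.Language) [L.Structure R]

/-- `X'` satisfies the valuative Mostowski Condition at every (strict) val-chain. -/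
def IsValLipschitz (A : Set R) (O : Set R) (X' : ℕ → Set (Fin n → R)) : Prop :=
  (∀ (m : ℕ) (e : ℕ → ℕ) (a : ℕ → Fin n → R), 1 ≤ m → IsPlainValChain O X' m e a →
    ∀ P : ℕ → Matrix (Fin n) (Fin n) R, ChainProjs L A X' e a P m →
      valMostIneq O X' (e m) (a 0) (a 1) ((1 - P 0) * prodP P 1 m)) ∧
  (∀ (m : ℕ) (e : ℕ → ℕ) (a : ℕ → Fin n → R), IsAugValChain O X' m e a →
    ∀ P : ℕ → Matrix (Fin n) (Fin n) R, ChainProjs L A X' e a P m →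
      valMostIneq O X' (e m) (a 0) (a 1) ((P 0 - P 1) * prodP P 2 (m - 1)))

/-- `X'` satisfies the valuative Mostowski Condition at every weak val-chain. -/
def SatisfiesWeakValMostowski (A : Set R) (O : Set R) (X' : ℕ → Set (Fin n → R)) : Prop :=
  (∀ (m : ℕ) (e : ℕ → ℕ) (a : ℕ → Fin n → R), 1 ≤ m → IsWeakPlainValChain O X' m e a →
    ∀ P : ℕ → Matrix (Fin n) (Fin n) R, ChainProjs L A X' e a P m →
      valMostIneq O X' (e m) (a 0) (a 1) ((1 - P 0) * prodP P 1 m)) ∧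
  (∀ (m : ℕ) (e : ℕ → ℕ) (a : ℕ → Fin n → R), IsWeakAugValChain O X' m e a →
    ∀ P : ℕ → Matrix (Fin n) (Fin n) R, ChainProjs L A X' e a P m →
      valMostIneq O X' (e m) (a 0) (a 1) ((P 0 - P 1) * prodP P 2 (m - 1)))

end LipStrat

end Val
section Aligned

namespace LipStrat

open Matrix

variable {R : Type*} [Field R] [LinearOrder R] [IsStrictOrderedRing R] [IsRealClosed R]

/-- Projection to the first `d` coordinates. -/
def prle {n : ℕ} (d : ℕ) (h : d ≤ n) (x : Fin n → R) : Fin d → R :=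
  fun i => x (Fin.castLE h i)

/-- Projection to the last `n - d` coordinates. -/
def prgt {n : ℕ} (d : ℕ) (h : d ≤ n) (x : Fin n → R) : Fin (n - d) → R :=
  fun i => x (Fin.cast (Nat.add_sub_cancel' h) (Fin.natAdd d i))

/-- Projection to the first `d` coordinates (junk value if `d > n`). -/
def prleD {n : ℕ} (d : ℕ) (x : Fin n → R) : Fin d → R :=
  if h : d ≤ n then prle d h x else fun _ => 0

/-- Projection to the last `n - d` coordinates (junk value if `d > n`). -/
def prgtD {n : ℕ} (d : ℕ) (x : Fin n → R) : Fin (n - d) → R :=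
  if h : d ≤ n then prgt d h x else fun _ => 0

variable [TopologicalSpace R] [OrderTopology R]
variable (L : FirstOrder.Language) [L.Structure R]

/-- `S ⊆ R^n` is aligned: for `d = dim S`, the base `S̄ = pr_{≤d}(S)` is open and `S` is the
graph of a definable C¹ function `f : S̄ → R^{n-d}` all of whose partial derivatives have
nonnegative valuation (i.e. lie in the valuation ring `O`). -/
def IsAligned (A O : Set R) {n : ℕ} (S : Set (Fin n → R)) : Prop :=
  ∃ (d : ℕ) (h : d ≤ n) (f : (Fin d → R) → Fin (n - d) → R)
    (J : (Fin d → R) → Fin (n - d) → Fin d → R),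
    d = odim S ∧ IsOpen (prle d h '' S) ∧ DefFun L A f ∧
    IsC1On f (prle d h '' S) J ∧
    (∀ a ∈ prle d h '' S, ∀ i j, J a i j ∈ O) ∧
    S = {x : Fin n → R | prle d h x ∈ prle d h '' S ∧ prgt d h x = f (prle d h x)}

end LipStrat

end Aligned

section Misc

namespace LipStrat

open Matrix

variable {R : Type*} [Field R] [LinearOrder R] [IsStrictOrderedRing R] [IsRealClosed R]

/-- The fiber of a definable family `X ⊆ R^n × Q` at the parameter `q`. -/
def famFiber {n N : ℕ} (X : Set ((Fin n ⊕ Fin N) → R)) (q : Fin N → R) :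
    Set (Fin n → R) :=
  {x | Sum.elim x q ∈ X}

/-- `M ∈ GLₙ(O)`: `M` is invertible and both `M` and its inverse have entries in `O`. -/
def MemGLO {n : ℕ} (O : Set R) (M : Matrix (Fin n) (Fin n) R) : Prop :=
  ∃ M' : Matrix (Fin n) (Fin n) R, M * M' = 1 ∧ M' * M = 1 ∧
    (∀ i j, M i j ∈ O) ∧ (∀ i j, M' i j ∈ O)

/-- `v(a) ≥ v(b) - v-dist(y, Z)`, with the conventions that the right hand side is `∞`
(forcing `a = 0`) if `Z = ∅` or `b = 0`, and `-∞` (trivially true) if `v-dist(y,Z) = ∞`. -/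
def vgeSubVdist {k : ℕ} (O : Set R) (a b : R) (y : Fin k → R) (Z : Set (Fin k → R)) : Prop :=
  if Z = ∅ then a = 0
  else if b = 0 then a = 0
  else if infDist y Z = 0 then True
  else vge O (a * infDist y Z) b

end LipStrat

end Misc

section Sedated

namespace LipStrat

open Matrix

variable {R : Type*} [Field R] [LinearOrder R] [IsStrictOrderedRing R] [IsRealClosed R]

/-- `ζ_ℓ(x) = dist(pr_{≤ e_ℓ}(x), R^{e_ℓ} ∖ pr_{≤ e_ℓ}(X))`. -/
def zeta {e1 : ℕ} (el : ℕ) (X : Set (Fin e1 → R)) (x : Fin e1 → R) : R :=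
  infDist (prleD el x) ((prleD el '' X)ᶜ)

/-- `ζ_ℓ = ∞`, i.e. the projection of `X` to the first `e_ℓ` coordinates is everything. -/
def zetaInf {e1 : ℕ} (el : ℕ) (X : Set (Fin e1 → R)) : Prop :=
  ((prleD el '' X)ᶜ : Set (Fin el → R)) = ∅

/-- `σ_ℓ(x) = max {1, ‖pr_{> e_ℓ}(x)‖ · ζ_{ℓ-1}(x)⁻¹}` (equal to `1` if `ζ_{ℓ-1} = ∞`). -/
def sigmaFn {e1 : ℕ} (e : ℕ → ℕ) (X : Set (Fin e1 → R)) (l : ℕ) (x : Fin e1 → R) : R :=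
  if zetaInf (e (l - 1)) X then 1
  else max 1 (enorm (prgtD (e l) x) * (zeta (e (l - 1)) X x)⁻¹)

/-- The sedation inequality `v(d) ≥ v(u) - v(ζ) + Σ v(σ)`, encoded multiplicatively, with the
conventions: if `ζ = ∞` the right hand side is `∞` (forcing `d = 0`); if `ζ = 0` it is
`-∞` (trivially true). -/
def sedIneq (O : Set R) (dv u ζ σp : R) (ζinf : Prop) : Prop :=
  if ζinf then dv = 0
  else if ζ = 0 then True
  else vge O (dv * ζ) (u * σp)

/-- The three versions of sedation. -/
inductive SedVersion | a | b | c

/-- The quantity `u` appearing in the sedation condition. -/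
def sedU {e1 : ℕ} (ver : SedVersion) (e : ℕ → ℕ) (f : (Fin e1 → R) → R)
    (x : Fin e1 → R) : R :=
  match ver with
  | .a => f x
  | .b => max |f x| (enorm (prgtD (e 2) x))
  | .c => 1

variable [TopologicalSpace R] [OrderTopology R]

/-- `f : X → R` (`X ⊆ R^{e 1}`) is `e_{[1,m']}`-v-sedated: it is C¹ and
`v(∂ᵢ f(x)) ≥ v(u(x)) - v(ζ_{m'}(x)) + Σ_{ℓ=2}^{m'} v(σ_ℓ(x))` for all `x ∈ X` and
all `1 ≤ i ≤ e_{m'}`. -/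
def IsSedated (O : Set R) (ver : SedVersion) (e : ℕ → ℕ) (m' : ℕ)
    (X : Set (Fin (e 1) → R)) (f : (Fin (e 1) → R) → R) : Prop :=
  ∃ g : (Fin (e 1) → R) → Fin (e 1) → R,
    IsC1ScalarOn f X g ∧
    ∀ x ∈ X, ∀ i : Fin (e 1), (i : ℕ) < e m' →
      sedIneq O (g x i) (sedU ver e f x) (zeta (e m') X x)
        (∏ l ∈ Finset.Icc 2 m', sigmaFn e X l x) (zetaInf (e m') X)

/-- `f : X → R` is `e_{[1,m']}`-c₂-sedated: it is C², `v(Jac f) ≥ 0`, and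
`v(∂ᵢⱼ f(x)) ≥ - v(ζ_{m'}(x)) + Σ_{ℓ=2}^{m'} v(σ_ℓ(x))` for `1 ≤ i ≤ e_{m'}`,
`1 ≤ j ≤ e_1`. -/
def IsC2Sedated (O : Set R) (e : ℕ → ℕ) (m' : ℕ)
    (X : Set (Fin (e 1) → R)) (f : (Fin (e 1) → R) → R) : Prop :=
  ∃ (g : (Fin (e 1) → R) → Fin (e 1) → R)
    (H : (Fin (e 1) → R) → Fin (e 1) → Fin (e 1) → R),
    IsC1ScalarOn f X g ∧
    (∀ j : Fin (e 1), IsC1ScalarOn (fun y => g y j) X (fun y => H y j)) ∧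
    (∀ x ∈ X, ∀ j : Fin (e 1), g x j ∈ O) ∧
    ∀ x ∈ X, ∀ i : Fin (e 1), (i : ℕ) < e m' → ∀ j : Fin (e 1),
      sedIneq O (H x j i) 1 (zeta (e m') X x)
        (∏ l ∈ Finset.Icc 2 m', sigmaFn e X l x) (zetaInf (e m') X)

end LipStrat

end Sedated
section More

namespace LipStrat

open Matrix

variable {R : Type*} [Field R] [LinearOrder R] [IsStrictOrderedRing R] [IsRealClosed R]

/-- `v(M) ≥ v(s) - v(t)` for a matrix `M` and vectors `s, t`. -/
def vMatGeSubVec {n : ℕ} (O : Set R) (M : Matrix (Fin n) (Fin n) R) (s t : Fin n → R) :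
    Prop :=
  ∀ i j : Fin n, ∃ k : Fin n, ∀ l : Fin n, vge O (M i j * t l) (s k)

/-- `v(M) ≥ v(s) - v-dist(a₀, X)` for a matrix `M` and a vector `s`
(`M` must be `0` if `X = ∅`). -/
def vMatGeSubDist {n : ℕ} (O : Set R) (M : Matrix (Fin n) (Fin n) R) (s : Fin n → R)
    (a0 : Fin n → R) (X : Set (Fin n → R)) : Prop :=
  if X = ∅ then M = 0
  else ∀ i j : Fin n, ∃ k : Fin n, vge O (M i j * infDist a0 X) (s k)

/-- `f` has partial derivative `c` in the `i`-th coordinate direction at `y`. -/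
def HasPartialAt {k : ℕ} (f : (Fin k → R) → R) (i : Fin k) (c : R) (y : Fin k → R) : Prop :=
  ∀ ε : R, 0 < ε → ∃ δ : R, 0 < δ ∧ ∀ h : R, h ≠ 0 → |h| < δ →
    |f (fun j => y j + (if j = i then h else 0)) - f y - c * h| ≤ ε * |h|

/-- `v(J(W)) ≥ 0`: the subspace `W ⊆ R^n` is the graph of a linear map
`M_W : R^d → R^{n-d}` all of whose entries lie in `O`
(in particular `W ∈ Gr°_{n,d}`, i.e. `W` projects onto the first `d` coordinates). -/
def JBounded (O : Set R) {n : ℕ} (d : ℕ) (h : d ≤ n) (W : Submodule R (Fin n → R)) : Prop :=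
  ∃ Mv : Matrix (Fin (n - d)) (Fin d) R, (∀ i j, Mv i j ∈ O) ∧
    (W : Set (Fin n → R)) = {x : Fin n → R | prgt d h x = Mv.mulVec (prle d h x)}

/-- The matrix representation of a set `Θ` of `d`-dimensional subspaces of `R^n`:
the set of `n × d` matrices of rank `d` whose column span lies in `Θ`. -/
def grassRep {n d : ℕ} (Θ : Set (Submodule R (Fin n → R))) :
    Set ((Fin n × Fin d) → R) :=
  {M | LinearIndependent R (fun j : Fin d => fun i : Fin n => M (i, j)) ∧
    Submodule.span R (Set.range fun j : Fin d => fun i : Fin n => M (i, j)) ∈ Θ}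

end LipStrat

end More

/-!
Write `D = P_{k,j} - P_{k+1,j}` and `Q = P_{j+2,j+2} ⋯ P_{m,m}`. By induction on the number of
factors one bounds `v(D P_{j+1,j+1} Q)` by comparing `P_{j+1,j+1}` with `P_{k+1,j+1}` through the
intermediate flags. For `k < i ≤ j`, the difference `(P_{i,j+1} - P_{i+1,j+1}) Q` is small by the
induction hypothesis and `D` by assumption. The remaining term involves the single flag `k + 1`,
and `D P_{k+1,j+1} = (1 - P_{k,j}) (P_{k,j+1} - P_{k+1,j+1})` since `V_{i,j+1} ⊆ V_{i,j}`; as the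
entries of orthogonal projections are bounded by `1`, the induction hypothesis applies again.
The product `(1 - P_{0,0}) P_{1,1} ⋯ P_{m,m}` is treated in the same way, and `P_{0,0} = P_{0,1}`
when `V_{0,1} = V_{0,0}`.
-/

namespace LipStrat

section ConvexHull

variable {L : FirstOrder.Language} {M : Type*} [L.Structure M]

theorem mem_of_definable_singleton (S : L.ElementarySubstructure M) {a : M}
    (ha : (S : Set M).Definable L {x : Fin 1 → M | x 0 = a}) : a ∈ S := by
  obtain ⟨_, rfl, haS⟩ := S.meetsDefinable {a} (Set.singleton_nonempty a) ha
  exact haS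

theorem apply_mem_of_definable_graph (S : L.ElementarySubstructure M) {f : M → M → M}
    (hf : (∅ : Set M).Definable L {v : Fin 3 → M | f (v 0) (v 1) = v 2})
    {a b : M} (ha : a ∈ S) (hb : b ∈ S) : f a b ∈ S := by
  have definable_eq (i : Fin 3) {c : M} (hc : c ∈ S) :
      (S : Set M).Definable L {v : Fin 3 → M | v i = c} :=
    (Definable.singleton_of_mem L (A := (S : Set M)) hc).preimage_comp fun _ : Fin 1 => i
  refine mem_of_definable_singleton S ?_
  convert (((hf.mono (Set.empty_subset (S : Set M))).inter (definable_eq 0 ha)).inter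
    (definable_eq 1 hb)).image_comp fun _ : Fin 1 => (2 : Fin 3) using 2
  ext x
  constructor
  · intro hx
    exact ⟨![a, b, f a b], by simp, funext fun i => by simpa [Subsingleton.elim i 0] using hx.symm⟩
  · rintro ⟨v, ⟨⟨hv, rfl⟩, rfl⟩, rfl⟩
    exact hv.symm

variable {R : Type*} [Field R] [LinearOrder R] [L.Structure R]

theorem zero_mem_of_expandsOrderedRing (hring : ExpandsOrderedRing (R := R) L)
    (R₀ : L.ElementarySubstructure R) : (0 : R) ∈ R₀ := by
  refine mem_of_definable_singleton R₀ ?_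
  convert (hring.add_def.mono (Set.empty_subset (R₀ : Set R))).preimage_comp
    fun _ : Fin 3 => (0 : Fin 1) using 2
  ext x
  simp

theorem one_mem_of_expandsOrderedRing (hring : ExpandsOrderedRing (R := R) L)
    (R₀ : L.ElementarySubstructure R) : (1 : R) ∈ R₀ := by
  refine mem_of_definable_singleton R₀ ?_
  convert ((hring.mul_def.mono (Set.empty_subset (R₀ : Set R))).preimage_comp
    fun _ : Fin 3 => (0 : Fin 1)).inter ((hring.add_def.mono
      (Set.empty_subset (R₀ : Set R))).preimage_comp fun _ : Fin 3 => (0 : Fin 1)).compl using 2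
  ext x
  have idempotent_iff : x 0 * x 0 = x 0 ↔ x 0 = 0 ∨ x 0 = 1 := IsIdempotentElem.iff_eq_zero_or_one
  simp only [Set.mem_ofPred_eq, Set.mem_inter_iff, Set.mem_compl_iff, Set.mem_preimage,
    Function.comp_apply, add_eq_left, idempotent_iff]
  grind

/-- An elementary substructure of an expansion of the ordered ring `R`, as a subsemiring of `R`.
Its closure under the ring operations makes its convex closure a valuation ring. -/
def elementarySubsemiring (hring : ExpandsOrderedRing (R := R) L)
    (R₀ : L.ElementarySubstructure R) : Subsemiring R where
  carrier := R₀
  add_mem' := apply_mem_of_definable_graph R₀ hring.add_def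
  mul_mem' := apply_mem_of_definable_graph R₀ hring.mul_def
  zero_mem' := zero_mem_of_expandsOrderedRing hring R₀
  one_mem' := one_mem_of_expandsOrderedRing hring R₀

variable [IsStrictOrderedRing R]

theorem mem_convexClosure_iff {S : Set R} {x : R} : x ∈ convexClosure S ↔ ∃ b ∈ S, |x| < b := by
  simp only [convexClosure, Set.mem_ofPred_eq, abs_lt]

theorem mem_convexClosure_of_abs_le_one (S : Subsemiring R) {x : R} (hx : |x| ≤ 1) :
    x ∈ convexClosure (S : Set R) :=
  mem_convexClosure_iff.2 ⟨1 + 1, S.add_mem S.one_mem S.one_mem, hx.trans_lt (lt_one_add 1)⟩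

/-- The convex closure of a subsemiring `S` of an ordered field, as a valuation subring; for `S` an
elementary substructure this is the valuation ring `O`. -/
def convexValuationSubring (S : Subsemiring R) : ValuationSubring R where
  carrier := convexClosure S
  mul_mem' ha hb := by
    obtain ⟨c, hc, hac⟩ := mem_convexClosure_iff.1 ha
    obtain ⟨d, hd, hbd⟩ := mem_convexClosure_iff.1 hb
    refine mem_convexClosure_iff.2 ⟨c * d, S.mul_mem hc hd, ?_⟩
    rw [abs_mul]
    exact mul_lt_mul'' hac hbd (abs_nonneg _) (abs_nonneg _)
  add_mem' ha hb := by
    obtain ⟨c, hc, hac⟩ := mem_convexClosure_iff.1 ha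
    obtain ⟨d, hd, hbd⟩ := mem_convexClosure_iff.1 hb
    exact mem_convexClosure_iff.2
      ⟨c + d, S.add_mem hc hd, (abs_add_le _ _).trans_lt (add_lt_add hac hbd)⟩
  one_mem' := mem_convexClosure_of_abs_le_one S abs_one.le
  zero_mem' := mem_convexClosure_of_abs_le_one S (by simp)
  neg_mem' ha := by simpa only [mem_convexClosure_iff, abs_neg] using ha
  mem_or_inv_mem' x := by
    refine (le_total |x| 1).imp (mem_convexClosure_of_abs_le_one S) fun hx =>
      mem_convexClosure_of_abs_le_one S ?_
    rw [abs_inv]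
    exact inv_le_one_of_one_le₀ hx

end ConvexHull

theorem vge_iff_valuation_le {K : Type*} [Field K] (A : ValuationSubring K) {x y : K} :
    vge (A : Set K) x y ↔ A.valuation x ≤ A.valuation y := by
  simp only [A.valuation_le_iff, Subtype.exists, exists_prop, vge, eq_comm, SetLike.mem_coe]

section MatrixVal

variable {R Γ₀ ι : Type*} [Ring R] [LinearOrderedCommMonoidWithZero Γ₀] [Fintype ι]

/-- The valuation `v(M)` of a square matrix, in which all the estimates are expressed. `Γ₀` is
written multiplicatively and has the reverse order, so the minimum of the valuations of the entries
becomes their supremum. -/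
def matrixVal (v : Valuation R Γ₀) (M : Matrix ι ι R) : Γ₀ :=
  Finset.univ.sup fun p : ι × ι => v (M p.1 p.2)

variable {v : Valuation R Γ₀} {M N : Matrix ι ι R} {a b c : Γ₀}

theorem matrixVal_le_iff : matrixVal v M ≤ a ↔ ∀ i j, v (M i j) ≤ a := by
  simp only [matrixVal, Finset.sup_le_iff, Finset.mem_univ, true_imp_iff, Prod.forall]

theorem matrixVal_mul_right_le_iff : matrixVal v M * a ≤ b ↔ ∀ i j, v (M i j) * a ≤ b := by
  rw [matrixVal,
    Finset.apply_sup_eq_sup_comp_of_linearOrder (· * a) (fun _ _ h => mul_le_mul_left h a)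
      (by simp only [bot_eq_zero, zero_mul])]
  simp only [Finset.sup_le_iff, Finset.mem_univ, true_imp_iff, Prod.forall, Function.comp_apply]

theorem apply_le_matrixVal (M : Matrix ι ι R) (i j : ι) : v (M i j) ≤ matrixVal v M :=
  matrixVal_le_iff.1 le_rfl i j

theorem matrixVal_neg (M : Matrix ι ι R) : matrixVal v (-M) = matrixVal v M := by
  simp only [matrixVal, Matrix.neg_apply, Valuation.map_neg]

theorem matrixVal_sub_le (M N : Matrix ι ι R) :
    matrixVal v (M - N) ≤ max (matrixVal v M) (matrixVal v N) :=
  matrixVal_le_iff.2 fun i j => (v.map_sub _ _).trans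
    (max_le_max (apply_le_matrixVal M i j) (apply_le_matrixVal N i j))

theorem matrixVal_mul_le (M N : Matrix ι ι R) :
    matrixVal v (M * N) ≤ matrixVal v M * matrixVal v N :=
  matrixVal_le_iff.2 fun i j => v.map_sum_le fun r _ => by
    rw [v.map_mul]
    exact mul_le_mul' (apply_le_matrixVal M i r) (apply_le_matrixVal N r j)

theorem matrixVal_one_le [DecidableEq ι] : matrixVal v (1 : Matrix ι ι R) ≤ 1 :=
  matrixVal_le_iff.2 fun i j => by
    rw [Matrix.one_apply]
    split_ifs <;> simp

theorem matrixVal_one_sub_le_one [DecidableEq ι] (hM : matrixVal v M ≤ 1) :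
    matrixVal v (1 - M) ≤ 1 :=
  (matrixVal_sub_le 1 M).trans (max_le matrixVal_one_le hM)

theorem matrixVal_sub_mul_le (hM : matrixVal v M * a ≤ b) (hN : matrixVal v N * a ≤ b) :
    matrixVal v (M - N) * a ≤ b := by
  refine (mul_le_mul_left (matrixVal_sub_le M N) a).trans ?_
  rcases max_choice (matrixVal v M) (matrixVal v N) with h | h <;> rwa [h]

theorem matrixVal_mul_mul_le (hM : matrixVal v M * b ≤ c) (hN : matrixVal v N * a ≤ b) :
    matrixVal v (M * N) * a ≤ c :=
  calc matrixVal v (M * N) * a ≤ matrixVal v M * matrixVal v N * a :=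
        mul_le_mul_left (matrixVal_mul_le M N) a
    _ = matrixVal v M * (matrixVal v N * a) := mul_assoc _ _ _
    _ ≤ matrixVal v M * b := mul_le_mul_right hN _
    _ ≤ c := hM

theorem matrixVal_mul_le_of_forall_sub_succ {f : ℕ → Matrix ι ι R} {p q : ℕ} (hpq : p ≤ q)
    (hp : matrixVal v (f p) * a ≤ b)
    (hf : ∀ i, p ≤ i → i < q → matrixVal v (f i - f (i + 1)) * a ≤ b) :
    matrixVal v (f q) * a ≤ b := by
  induction q, hpq using Nat.le_induction with
  | base => exact hp
  | succ q hpq ih =>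
    rw [← sub_sub_cancel (f q) (f (q + 1))]
    exact matrixVal_sub_mul_le (ih fun i hi hiq => hf i hi (hiq.trans q.lt_succ_self))
      (hf q hpq q.lt_succ_self)

theorem matrixVal_sub_mul_mul_le_of_fixed {A B X Y : Matrix ι ι R}
    (hA : matrixVal v A ≤ 1) (hAX : A * X = X) (hBY : B * Y = Y)
    (hXY : matrixVal v (X - Y) * a ≤ b) : matrixVal v ((A - B) * Y) * a ≤ b := by
  have factor : (A - B) * Y = (1 - A) * (X - Y) := by
    simp only [sub_mul, mul_sub, one_mul, hAX, hBY, sub_self, zero_sub, neg_sub]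
  rw [factor]
  exact matrixVal_mul_mul_le (mul_le_of_le_one_left' (matrixVal_one_sub_le_one hA)) hXY

theorem matrixVal_sub_mul_prod_le [DecidableEq ι] {m : ℕ} {lam : ℕ → Γ₀}
    {P : ℕ → ℕ → Matrix ι ι R}
    (hlam : ∀ i j, i ≤ j → j ≤ m → lam i ≤ lam j)
    (hP : ∀ k l, k ≤ l → l ≤ m → matrixVal v (P k l) ≤ 1)
    (hflag : ∀ k l, k ≤ l → l < m → P k l * P k (l + 1) = P k (l + 1))
    (hΔ : ∀ k l, k < l → l ≤ m → matrixVal v (P k l - P (k + 1) l) * lam l ≤ lam k)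
    (r : ℕ) {k j : ℕ} (hkj : k < j) (hjm : j + r = m) :
    matrixVal v ((P k j - P (k + 1) j) *
      ((List.range' (j + 1) r).map fun l => P l l).prod) * lam m ≤ lam k := by
  induction r generalizing k j with
  | zero =>
    obtain rfl : j = m := hjm
    simpa only [List.range'_zero, List.map_nil, List.prod_nil, mul_one] using hΔ k j hkj le_rfl
  | succ r ih =>
    rw [List.range'_succ, List.map_cons, List.prod_cons]
    set D := P k j - P (k + 1) j
    set Q := ((List.range' (j + 1 + 1) r).map fun l => P l l).prod
    have hQ {i : ℕ} (hi : i ≤ j) :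
        matrixVal v ((P i (j + 1) - P (i + 1) (j + 1)) * Q) * lam m ≤ lam i :=
      ih (Nat.lt_succ_of_le hi) (by omega)
    -- Move from `P (k + 1) (j + 1)` to `P (j + 1) (j + 1)` one flag at a time.
    refine matrixVal_mul_le_of_forall_sub_succ (f := fun i => D * (P i (j + 1) * Q))
      (p := k + 1) (by omega) ?_ fun i _ hij => ?_
    · refine matrixVal_sub_mul_mul_le_of_fixed (X := P k (j + 1) * Q)
        (hP k j hkj.le (by omega)) ?_ ?_ ?_
      · rw [← mul_assoc, hflag k j hkj.le (by omega)]
      · rw [← mul_assoc, hflag (k + 1) j hkj (by omega)]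
      · rw [← sub_mul]
        exact hQ hkj.le
    · rw [← mul_sub, ← sub_mul]
      refine matrixVal_mul_mul_le (hΔ k j hkj (by omega)) ((hQ (by omega)).trans ?_)
      exact hlam i j (by omega) (by omega)

theorem matrixVal_one_sub_mul_prod_le [DecidableEq ι] {m : ℕ} {lam : ℕ → Γ₀}
    {P : ℕ → ℕ → Matrix ι ι R}
    (hlam : ∀ i j, i ≤ j → j ≤ m → lam i ≤ lam j)
    (hP : ∀ k l, k ≤ l → l ≤ m → matrixVal v (P k l) ≤ 1)
    (hflag : ∀ k l, k ≤ l → l < m → P k l * P k (l + 1) = P k (l + 1))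
    (hΔ : ∀ k l, k < l → l ≤ m → matrixVal v (P k l - P (k + 1) l) * lam l ≤ lam k)
    {k r : ℕ} (hkm : k + r = m) :
    matrixVal v ((1 - P k k) * ((List.range' (k + 1) r).map fun l => P l l).prod) * lam m ≤
      lam k := by
  cases r with
  | zero =>
    obtain rfl : k = m := hkm
    rw [List.range'_zero, List.map_nil, List.prod_nil, mul_one]
    exact mul_le_of_le_one_left' (matrixVal_one_sub_le_one (hP k k le_rfl le_rfl))
  | succ r =>
    rw [List.range'_succ, List.map_cons, List.prod_cons, ← matrixVal_neg, ← neg_mul, neg_sub]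
    set Q := ((List.range' (k + 1 + 1) r).map fun l => P l l).prod
    refine matrixVal_sub_mul_mul_le_of_fixed (X := P k (k + 1) * Q) (hP k k le_rfl (by omega)) ?_
      (one_mul _) ?_
    · rw [← mul_assoc, hflag k k le_rfl (by omega)]
    · rw [← sub_mul]
      exact matrixVal_sub_mul_prod_le hlam hP hflag hΔ r k.lt_succ_self (by omega)

end MatrixVal

theorem forall_vge_iff_matrixVal_mul_le {K ι : Type*} [Field K] [Fintype ι]
    (A : ValuationSubring K) {M : Matrix ι ι K} {s t : K} :
    (∀ i j, vge (A : Set K) (M i j * s) t) ↔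
      matrixVal A.valuation M * A.valuation s ≤ A.valuation t := by
  simp only [vge_iff_valuation_le, map_mul, matrixVal_mul_right_le_iff]

theorem prodP_eq_prod_range' {K : Type*} [Field K] {n : ℕ} (P : ℕ → Matrix (Fin n) (Fin n) K)
    (lo len : ℕ) : prodP P lo len = ((List.range' lo len).map P).prod := by
  rw [prodP, List.range'_eq_map_range, List.map_map, Function.comp_def]

namespace IsOrthProjOnto

variable {K : Type*} [Field K] {n : ℕ} {W W' : Submodule K (Fin n → K)}
  {P P' : Matrix (Fin n) (Fin n) K}

theorem mul_eq_right (hP : IsOrthProjOnto W P) (hP' : IsOrthProjOnto W' P') (h : W' ≤ W) :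
    P * P' = P' :=
  Matrix.ext_of_mulVec_single fun i => by
    rw [← Matrix.mulVec_mulVec]
    exact hP.2.1 _ (h (hP'.1 _))

theorem transpose_mul_eq (hP : IsOrthProjOnto W P) (hP' : IsOrthProjOnto W' P') (h : W' ≤ W) :
    Pᵀ * P' = P' := by
  refine Matrix.ext_of_mulVec_single fun i => ?_
  rw [← Matrix.mulVec_mulVec]
  set w := P' *ᵥ Pi.single i 1
  have orthogonal (x : Fin n → K) : (x - P *ᵥ x) ⬝ᵥ w = 0 := hP.2.2 x w (h (hP'.1 _))
  refine dotProduct_eq _ _ fun x => ?_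
  rw [Matrix.mulVec_transpose, ← Matrix.dotProduct_mulVec, dotProduct_comm w, dotProduct_comm w,
    ← sub_eq_zero, ← neg_eq_zero, neg_sub, ← sub_dotProduct, orthogonal]

theorem transpose_eq (hP : IsOrthProjOnto W P) : Pᵀ = P :=
  calc Pᵀ = (Pᵀ * P)ᵀ := by rw [hP.transpose_mul_eq hP le_rfl]
    _ = Pᵀ * P := by rw [Matrix.transpose_mul, Matrix.transpose_transpose]
    _ = P := hP.transpose_mul_eq hP le_rfl

theorem eq (hP : IsOrthProjOnto W P) (hP' : IsOrthProjOnto W P') : P = P' :=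
  calc P = P' * P := (hP'.mul_eq_right hP le_rfl).symm
    _ = (P * P')ᵀ := by rw [Matrix.transpose_mul, hP.transpose_eq, hP'.transpose_eq]
    _ = P' := by rw [hP.mul_eq_right hP' le_rfl, hP'.transpose_eq]

end IsOrthProjOnto

theorem abs_apply_le_one_of_transpose_mul_self_eq {K ι : Type*} [Fintype ι] [CommRing K]
    [LinearOrder K] [IsStrictOrderedRing K] {P : Matrix ι ι K} (hP : Pᵀ * P = P) (i j : ι) :
    |P i j| ≤ 1 := by
  have sq_le (r : ι) : P r j ^ 2 ≤ P j j := by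
    calc P r j ^ 2 ≤ ∑ s, P s j ^ 2 :=
          Finset.single_le_sum (fun s _ => sq_nonneg (P s j)) (Finset.mem_univ r)
      _ = (Pᵀ * P) j j := by simp only [Matrix.mul_apply, Matrix.transpose_apply, sq]
      _ = P j j := by rw [hP]
  have diag_le_one : P j j ≤ 1 := le_of_not_gt fun h => by nlinarith [sq_le j]
  exact abs_le_one_iff_mul_self_le_one.2 (by nlinarith [sq_le i])

theorem IsOrthProjOnto.matrixVal_le_one {K Γ₀ : Type*} [Field K] [LinearOrder K]
    [IsStrictOrderedRing K] [LinearOrderedCommMonoidWithZero Γ₀] {v : Valuation K Γ₀}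
    (hv : ∀ x : K, |x| ≤ 1 → v x ≤ 1) {n : ℕ} {W : Submodule K (Fin n → K)}
    {P : Matrix (Fin n) (Fin n) K} (hP : IsOrthProjOnto W P) : matrixVal v P ≤ 1 :=
  matrixVal_le_iff.2 fun i j =>
    hv _ (abs_apply_le_one_of_transpose_mul_self_eq (hP.transpose_mul_eq hP le_rfl) i j)

end LipStrat

open LipStrat in
theorem flag_lemma_general {R : Type*} [Field R] [LinearOrder R] [IsStrictOrderedRing R]
    (A : ValuationSubring R) (hA : ∀ x : R, |x| ≤ 1 → x ∈ A)
    {n m : ℕ} (hm : 1 ≤ m) (t : ℕ → R)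
    (hdec : ∀ i j : ℕ, i ≤ j → j ≤ m → vge (A : Set R) (t i) (t j))
    (V : ℕ → ℕ → Submodule R (Fin n → R)) (P : ℕ → ℕ → Matrix (Fin n) (Fin n) R)
    (hP : ∀ k l : ℕ, k ≤ l → l ≤ m → IsOrthProjOnto (V k l) (P k l))
    (hmono : ∀ k l l' : ℕ, k ≤ l → l ≤ l' → l' ≤ m → V k l' ≤ V k l)
    (hΔ : ∀ k l : ℕ, k < l → l ≤ m →
      ∀ i j : Fin n, vge (A : Set R) ((P k l - P (k + 1) l) i j * t l) (t k)) :
    (∀ i j : Fin n,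
      vge (A : Set R) (((1 - P 0 0) * prodP (fun l => P l l) 1 m) i j * t m) (t 0)) ∧
    (V 0 1 = V 0 0 → ∀ i j : Fin n,
      vge (A : Set R) (((P 0 0 - P 1 1) * prodP (fun l => P l l) 2 (m - 1)) i j * t m) (t 0)) := by
  simp only [vge_iff_valuation_le] at hdec
  simp only [forall_vge_iff_matrixVal_mul_le, prodP_eq_prod_range'] at hΔ ⊢
  have hPle (k l : ℕ) (hkl : k ≤ l) (hl : l ≤ m) : matrixVal A.valuation (P k l) ≤ 1 :=
    (hP k l hkl hl).matrixVal_le_one fun x hx => (A.valuation_le_one_iff x).2 (hA x hx)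
  have hflag (k l : ℕ) (hkl : k ≤ l) (hl : l < m) : P k l * P k (l + 1) = P k (l + 1) :=
    (hP k l hkl hl.le).mul_eq_right (hP k (l + 1) (by omega) hl) (hmono k l _ hkl (by omega) hl)
  refine ⟨matrixVal_one_sub_mul_prod_le (lam := fun i => A.valuation (t i)) hdec hPle hflag hΔ
    (zero_add m), fun hV => ?_⟩
  rw [(hP 0 0 le_rfl m.zero_le).eq (hV ▸ hP 0 1 zero_le_one hm)]
  exact matrixVal_sub_mul_prod_le (lam := fun i => A.valuation (t i)) hdec hPle hflag hΔ
    (m - 1) one_pos (Nat.add_sub_cancel' hm)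

open LipStrat in
/-- Lemma 2.32, the flag lemma. Given `λ₁ ≥ ⋯ ≥ λ_{m+1}` in `Γ`
(represented by nonzero elements `t 0, …, t m` with decreasing valuations) and partial flags
`V_{k,m} ⊆ ⋯ ⊆ V_{k,k} ⊆ R^n` with `Δ(V_{k,ℓ}, V_{k+1,ℓ}) ≥ λ_{k+1} - λ_{ℓ+1}`, one has
`v((1 - P_{0,0}) P_{1,1} ⋯ P_{m,m}) ≥ λ₁ - λ_{m+1}`, and if moreover
`dim V_{1,1} = dim V_{0,0}` then also
`v((P_{0,0} - P_{1,1}) P_{2,2} ⋯ P_{m,m}) ≥ λ₁ - λ_{m+1}`. -/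
theorem flag_lemma
    {R : Type*} [Field R] [LinearOrder R] [IsStrictOrderedRing R] [LipStrat.IsRealClosed R]
    [TopologicalSpace R] [OrderTopology R]
    (L : FirstOrder.Language) [L.Structure R]
    (hring : ExpandsOrderedRing (R := R) L)
    (homin : IsOMinimal (R := R) L)
    (R₀ : L.ElementarySubstructure R) (hproper : (R₀ : Set R) ≠ Set.univ)
    (O : Set R) (hO : O = convexClosure (R₀ : Set R))
    {n : ℕ} (m : ℕ) (hm : 1 ≤ m)
    -- `λ_{i+1} = v (t i)`, with `λ₁ ≥ λ₂ ≥ ⋯ ≥ λ_{m+1}`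
    (t : ℕ → R) (ht : ∀ i : ℕ, i ≤ m → t i ≠ 0)
    (hdec : ∀ i j : ℕ, i ≤ j → j ≤ m → vge O (t i) (t j))
    (V : ℕ → ℕ → Submodule R (Fin n → R))
    (P : ℕ → ℕ → Matrix (Fin n) (Fin n) R)
    (hP : ∀ k l : ℕ, k ≤ l → l ≤ m → IsOrthProjOnto (V k l) (P k l))
    (hmono : ∀ k l l' : ℕ, k ≤ l → l ≤ l' → l' ≤ m → V k l' ≤ V k l)
    (hdim : ∀ k l : ℕ, k < l → l ≤ m →
      Module.finrank R (V k l) = Module.finrank R (V (k + 1) l))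
    (hΔ : ∀ k l : ℕ, k < l → l ≤ m →
      ∀ i j : Fin n, vge O ((P k l - P (k + 1) l) i j * t l) (t k)) :
    (∀ i j : Fin n,
      vge O ((((1 : Matrix (Fin n) (Fin n) R) - P 0 0) *
        prodP (fun l => P l l) 1 m) i j * t m) (t 0)) ∧
    (Module.finrank R (V 1 1) = Module.finrank R (V 0 0) →
      ∀ i j : Fin n,
        vge O (((P 0 0 - P 1 1) * prodP (fun l => P l l) 2 (m - 1)) i j * t m) (t 0)) := by
  subst hO
  exact (flag_lemma_general (convexValuationSubring (elementarySubsemiring hring R₀))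
    (fun _ => mem_convexClosure_of_abs_le_one _) hm t hdec V P hP hmono hΔ).imp_right
    fun second hd => second <| Submodule.eq_of_le_of_finrank_eq
      (hmono 0 0 1 le_rfl zero_le_one hm) ((hdim 0 1 one_pos hm).trans hd)
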